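/- Let H ∈ (0,1) and let n be an integer with n ≥ 2^{1/H}. Then f(H,n) ≥ 1/(5√H) − 6√(ln n)/n^H − 0.0107. -/

import Mathlib

open MeasureTheory ProbabilityTheory Real Set Filter Topology

noncomputable section

/-- `X` is a centered Gaussian process on the time set `S`: every finite linear
combination `∑ i, c i * X (ts i)` of its values at times in `S` is a centered
Gaussian random variable. -/
def IsCenteredGaussianOn {Ω : Type} [MeasurableSpace Ω] (μ : Measure Ω)
    (X : ℝ → Ω → ℝ) (S : Set ℝ) : Prop :=
  (∀ t ∈ S, Measurable (X t)) ∧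
  ∀ (k : ℕ) (c : Fin k → ℝ) (ts : Fin k → ℝ), (∀ i, ts i ∈ S) →
    ∃ v : NNReal, μ.map (fun ω => ∑ i, c i * X (ts i) ω) = gaussianReal 0 v

/-- The `L²`-norm `‖Y‖₂ = (E Y²)^{1/2}` of a real random variable. -/
def l2norm {Ω : Type} [MeasurableSpace Ω] (μ : Measure Ω) (Y : Ω → ℝ) : ℝ :=
  Real.sqrt (∫ ω, (Y ω) ^ 2 ∂μ)

/-- The expected supremum `E [sup_{0 ≤ t ≤ 1} X_t]`. -/
def expMax {Ω : Type} [MeasurableSpace Ω] (μ : Measure Ω) (X : ℝ → Ω → ℝ) : ℝ :=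
  ∫ ω, (⨆ t : Icc (0:ℝ) 1, X t.1 ω) ∂μ

/-- The expected maximum over the grid: `E [max_{0 ≤ i ≤ n} X_{i/n}]`. -/
def expMaxGrid {Ω : Type} [MeasurableSpace Ω] (μ : Measure Ω) (X : ℝ → Ω → ℝ) (n : ℕ) : ℝ :=
  ∫ ω, (⨆ i : Fin (n + 1), X (((i : ℕ) : ℝ) / (n : ℝ)) ω) ∂μ

/-- `B` is a fractional Brownian motion with Hurst parameter `H`: a centered Gaussian
process on `[0,∞)` with a.s. continuous sample paths, `B 0 = 0`, and covariance
`E[B_s B_t] = (s^{2H} + t^{2H} - |t-s|^{2H}) / 2`. -/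
def IsFBM {Ω : Type} [MeasurableSpace Ω] (μ : Measure Ω) (H : ℝ) (B : ℝ → Ω → ℝ) : Prop :=
  IsCenteredGaussianOn μ B (Ici 0) ∧
  (∀ᵐ ω ∂μ, ContinuousOn (fun t => B t ω) (Ici 0)) ∧
  (∀ᵐ ω ∂μ, B 0 ω = 0) ∧
  ∀ s t : ℝ, 0 ≤ s → 0 ≤ t →
    ∫ ω, B s ω * B t ω ∂μ = (s ^ (2 * H) + t ^ (2 * H) - |t - s| ^ (2 * H)) / 2

/-!
If `n ^ H ≤ 16`, then `log n ≥ log 2 / H` makes the lower bound negative, while the expected maximum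
is nonnegative. If `n ^ H ≥ 16` and `H ≥ 1 / 7`, the three times `0`, `⌊n / 2⌋ / n` and `1` suffice:
the range of three numbers is half the sum of their pairwise distances, and by the symmetry of the
process the expected maximum is half the expected range. If `n ^ H ≥ 16` and `H ≤ 1 / 7`, consider
about `exp (1 / (2 * H))` equally spaced grid times. Since `t ↦ t ^ (2 * H)` is increasing and
concave, the covariance matrix of the process at these times dominates a multiple `σ ^ 2` of the
identity, and Jensen's inequality bounds the expected maximum below by `σ` times that of as many
independent standard Gaussians. The latter exceeds `0.53 / √H`, as one sees by looking at the first
variable that exceeds `0.6 / √H`.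
-/

section ConcaveKernels

variable {ι : Type*} [Fintype ι]

lemma sum_mul_card_inter_nonneg {α : Type*} [DecidableEq α] (A : ι → Finset α) (a : ι → ℝ) :
    0 ≤ ∑ i, ∑ j, a i * a j * ((A i ∩ A j).card : ℝ) := by
  have card_inter : ∀ i j, ((A i ∩ A j).card : ℝ) = ∑ u ∈ Finset.univ.biUnion A,
      (if u ∈ A i then 1 else 0) * (if u ∈ A j then 1 else 0) := by
    intro i j
    have subset : A i ∩ A j ⊆ Finset.univ.biUnion A :=
      Finset.inter_subset_left.trans (Finset.subset_biUnion_of_mem A (Finset.mem_univ i))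
    simp_rw [mul_ite, mul_one, mul_zero, ← ite_and, and_comm, ← Finset.mem_inter, Finset.sum_boole,
      Finset.filter_mem_eq_inter, Finset.inter_eq_right.2 subset]
  have sum_eq : ∑ i, ∑ j, a i * a j * ((A i ∩ A j).card : ℝ) =
      ∑ u ∈ Finset.univ.biUnion A, (∑ i, a i * if u ∈ A i then 1 else 0) ^ 2 := by
    simp_rw [card_inter, sq, Finset.sum_mul_sum, Finset.mul_sum]
    rw [Finset.sum_comm_cycle]
    simp_rw [mul_mul_mul_comm]
  rw [sum_eq]
  positivity

lemma card_Ico_inter_Ico_add (p q L : ℕ) :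
    (Finset.Ico p (p + L) ∩ Finset.Ico q (q + L)).card = L - Nat.dist p q := by
  rw [Finset.Ico_inter_Ico, Nat.card_Ico, Nat.dist]
  lia

lemma sum_mul_sub_dist_nonneg (p : ι → ℕ) (L : ℕ) (a : ι → ℝ) :
    0 ≤ ∑ i, ∑ j, a i * a j * ((L - Nat.dist (p i) (p j) : ℕ) : ℝ) := by
  simpa only [card_Ico_inter_Ico_add] using
    sum_mul_card_inter_nonneg (fun i => Finset.Ico (p i) (p i + L)) a

-- An increasing concave function is a constant minus a nonnegative combination of the triangular
-- kernels `(L - k)₊`.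
lemma eq_sum_triangular (h : ℕ → ℝ) {M k : ℕ} (hk : k ≤ M + 1) :
    h k = h (M + 1) - (h (M + 1) - h M) * ((M + 1 - k : ℕ) : ℝ) +
      ∑ L ∈ Finset.range M, (h (L + 2) + h L - 2 * h (L + 1)) * ((L + 1 - k : ℕ) : ℝ) := by
  induction M with
  | zero =>
    obtain rfl | rfl : k = 0 ∨ k = 1 := by lia
    all_goals simp
  | succ M ih =>
    rw [Finset.sum_range_succ]
    rcases hk.eq_or_lt with rfl | hlt
    · have vanish : ∀ L ∈ Finset.range M, (h (L + 2) + h L - 2 * h (L + 1)) *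
          ((L + 1 - (M + 1 + 1) : ℕ) : ℝ) = 0 := fun L hL => by
        rw [Nat.sub_eq_zero_of_le (by have := Finset.mem_range.1 hL; lia), Nat.cast_zero, mul_zero]
      rw [Finset.sum_eq_zero vanish]
      simp
    · have hle : k ≤ M + 1 := Nat.lt_succ_iff.1 hlt
      have ih := ih hle
      rw [Nat.cast_sub hle] at ih
      rw [Nat.cast_sub hle, Nat.cast_sub hk]
      push_cast at ih ⊢
      rw [show M + 1 + 1 = M + 2 from rfl]
      linarith

lemma sum_mul_concave_dist_nonpos (p : ι → ℕ) {h : ℕ → ℝ} (hmono : Monotone h)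
    (hconc : ∀ k, h (k + 2) + h k ≤ 2 * h (k + 1)) {a : ι → ℝ} (ha : ∑ i, a i = 0) :
    ∑ i, ∑ j, a i * a j * h (Nat.dist (p i) (p j)) ≤ 0 := by
  set M := ∑ i, p i
  set T : ℕ → ℝ := fun L => ∑ i, ∑ j, a i * a j * ((L - Nat.dist (p i) (p j) : ℕ) : ℝ) with hT
  have dist_le : ∀ i j, Nat.dist (p i) (p j) ≤ M + 1 := fun i j => by
    have hp : ∀ l, p l ≤ M := fun l =>
      Finset.single_le_sum (f := p) (fun _ _ => Nat.zero_le _) (Finset.mem_univ l)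
    have := hp i
    have := hp j
    unfold Nat.dist
    lia
  have expand : ∑ i, ∑ j, a i * a j * h (Nat.dist (p i) (p j)) =
      h (M + 1) * ∑ i, ∑ j, a i * a j - (h (M + 1) - h M) * T (M + 1) +
        ∑ L ∈ Finset.range M, (h (L + 2) + h L - 2 * h (L + 1)) * T (L + 1) := by
    simp_rw [hT, Finset.mul_sum]
    rw [← Finset.sum_comm_cycle]
    simp_rw [← Finset.sum_sub_distrib, ← Finset.sum_add_distrib]
    refine Finset.sum_congr rfl fun i _ => Finset.sum_congr rfl fun j _ => ?_
    rw [eq_sum_triangular h (dist_le i j), mul_add, mul_sub, Finset.mul_sum]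
    congr 1
    · ring
    · exact Finset.sum_congr rfl fun _ _ => by ring
  have const_term : ∑ i, ∑ j, a i * a j = 0 := by
    rw [← Finset.sum_mul_sum, ha, zero_mul]
  have slope_term : 0 ≤ (h (M + 1) - h M) * T (M + 1) :=
    mul_nonneg (sub_nonneg.2 (hmono M.le_succ)) (sum_mul_sub_dist_nonneg p _ a)
  have curvature_term :
      ∑ L ∈ Finset.range M, (h (L + 2) + h L - 2 * h (L + 1)) * T (L + 1) ≤ 0 :=
    Finset.sum_nonpos fun L _ => mul_nonpos_of_nonpos_of_nonneg (sub_nonpos.2 (hconc L))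
      (sum_mul_sub_dist_nonneg p _ a)
  rw [expand, const_term]
  linarith

-- Add the point `0` to the family, with the weight that makes the total mass vanish.
lemma sum_mul_concave_add_sub_dist_nonneg (p : ι → ℕ) {h : ℕ → ℝ} (hmono : Monotone h)
    (hconc : ∀ k, h (k + 2) + h k ≤ 2 * h (k + 1)) (a : ι → ℝ) :
    0 ≤ ∑ i, ∑ j, a i * a j * (h (p i) + h (p j) - h (Nat.dist (p i) (p j)) - h 0) := by
  have nonpos := sum_mul_concave_dist_nonpos (fun o : Option ι => o.elim 0 p) hmono hconc
    (a := fun o => o.elim (-∑ i, a i) a) (by simp [Fintype.sum_option])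
  set S := ∑ i, a i
  set T := ∑ i, a i * h (p i)
  set Q := ∑ i, ∑ j, a i * a j * h (Nat.dist (p i) (p j))
  have expand : ∑ i, ∑ j, a i * a j * (h (p i) + h (p j) - h (Nat.dist (p i) (p j)) - h 0) =
      T * S + S * T - Q - S * S * h 0 := by
    simp_rw [S, T, Q, Finset.sum_mul_sum, Finset.sum_mul, ← Finset.sum_add_distrib,
      ← Finset.sum_sub_distrib]
    exact Finset.sum_congr rfl fun i _ => Finset.sum_congr rfl fun j _ => by ring
  have left_term : ∑ j, -S * a j * h (p j) = -S * T := by simp_rw [T, Finset.mul_sum, mul_assoc]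
  have right_term : ∑ i, a i * -S * h (p i) = -S * T := by
    simp_rw [mul_comm (a _) (-S), left_term]
  simp only [Fintype.sum_option, Option.elim, Nat.dist_zero_left, Nat.dist_zero_right,
    Finset.sum_add_distrib, left_term, right_term] at nonpos
  rw [expand]
  linarith

end ConcaveKernels

section FractionalCovariance

open scoped Matrix

/-- The covariance function of fractional Brownian motion with Hurst parameter `H`. -/
def fbmCov (H s t : ℝ) : ℝ := (s ^ (2 * H) + t ^ (2 * H) - |t - s| ^ (2 * H)) / 2

lemma fbmCov_comm (H s t : ℝ) : fbmCov H s t = fbmCov H t s := by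
  rw [fbmCov, fbmCov, abs_sub_comm, add_comm]

lemma fbmCov_mul_mul (H : ℝ) {c s t : ℝ} (hc : 0 ≤ c) (hs : 0 ≤ s) (ht : 0 ≤ t) :
    fbmCov H (s * c) (t * c) = c ^ (2 * H) * fbmCov H s t := by
  rw [fbmCov, fbmCov, ← sub_mul, abs_mul, abs_of_nonneg hc, mul_rpow hs hc, mul_rpow ht hc,
    mul_rpow (abs_nonneg _) hc]
  ring

lemma fbmCov_self {H t : ℝ} (hH : H ≠ 0) : fbmCov H t t = t ^ (2 * H) := by
  simp [fbmCov, hH]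

lemma natCast_dist (p q : ℕ) : ((Nat.dist p q : ℕ) : ℝ) = |(q : ℝ) - p| := by
  rcases le_total p q with h | h
  · rw [Nat.dist_eq_sub_of_le h, Nat.cast_sub h, abs_of_nonneg (by simpa using h)]
  · rw [Nat.dist_eq_sub_of_le_right h, Nat.cast_sub h, abs_of_nonpos (by simpa using h), neg_sub]

lemma rpow_add_two_add_rpow_le {s x : ℝ} (hs0 : 0 ≤ s) (hs1 : s ≤ 1) (hx : 0 ≤ x) :
    (x + 2) ^ s + x ^ s ≤ 2 * (x + 1) ^ s := by
  have midpoint := (concaveOn_rpow hs0 hs1).2 (mem_Ici.2 hx) (mem_Ici.2 (by linarith : 0 ≤ x + 2))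
    one_half_pos.le one_half_pos.le (add_halves 1)
  simp only [smul_eq_mul] at midpoint
  rw [show 1 / 2 * x + 1 / 2 * (x + 2) = x + 1 by ring] at midpoint
  linarith

/-- The function `k ↦ k ^ s` with its value at `0` raised to `2 - 2 ^ s`, the largest value that
keeps it concave on `ℕ` when `0 ≤ s ≤ 1`. -/
def raisedRPow (s : ℝ) (k : ℕ) : ℝ := if k = 0 then 2 - 2 ^ s else (k : ℝ) ^ s

lemma raisedRPow_zero (s : ℝ) : raisedRPow s 0 = 2 - 2 ^ s := if_pos rfl

lemma raisedRPow_of_ne_zero (s : ℝ) {k : ℕ} (hk : k ≠ 0) : raisedRPow s k = (k : ℝ) ^ s :=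
  if_neg hk

lemma monotone_raisedRPow {s : ℝ} (hs : 0 ≤ s) : Monotone (raisedRPow s) := by
  refine monotone_nat_of_le_succ fun k => ?_
  rw [raisedRPow_of_ne_zero s (by lia : k + 1 ≠ 0)]
  rcases eq_or_ne k 0 with rfl | hk
  · have : (1 : ℝ) ≤ 2 ^ s := one_le_rpow one_le_two hs
    rw [raisedRPow_zero, zero_add, Nat.cast_one, one_rpow]
    linarith
  · rw [raisedRPow_of_ne_zero s hk]
    gcongr
    simp

lemma raisedRPow_add_two_add_le {s : ℝ} (hs0 : 0 ≤ s) (hs1 : s ≤ 1) (k : ℕ) :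
    raisedRPow s (k + 2) + raisedRPow s k ≤ 2 * raisedRPow s (k + 1) := by
  rw [raisedRPow_of_ne_zero s (by lia : k + 2 ≠ 0), raisedRPow_of_ne_zero s k.succ_ne_zero]
  rcases eq_or_ne k 0 with rfl | hk
  · simp [raisedRPow_zero]
  · rw [raisedRPow_of_ne_zero s hk]
    exact_mod_cast rpow_add_two_add_rpow_le hs0 hs1 k.cast_nonneg

lemma fbmCov_natCast_sub_eq {ι : Type*} [DecidableEq ι] {p : ι → ℕ} (hp : p.Injective)
    (hp0 : ∀ i, p i ≠ 0) {H : ℝ} (hH : H ≠ 0) (i j : ι) :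
    fbmCov H (p i) (p j) - (2 - 2 ^ (2 * H)) / 2 * (if i = j then 1 else 0) =
      (raisedRPow (2 * H) (p i) + raisedRPow (2 * H) (p j)
        - raisedRPow (2 * H) (Nat.dist (p i) (p j)) - raisedRPow (2 * H) 0) / 2
        + (2 - 2 ^ (2 * H)) / 2 := by
  rw [raisedRPow_zero, raisedRPow_of_ne_zero _ (hp0 i), raisedRPow_of_ne_zero _ (hp0 j)]
  rcases eq_or_ne i j with rfl | hij
  · rw [if_pos rfl, fbmCov_self hH, Nat.dist_self, raisedRPow_zero]
    ring
  · have dist_ne : Nat.dist (p i) (p j) ≠ 0 := fun h => hij (hp (Nat.eq_of_dist_eq_zero h))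
    rw [if_neg hij, raisedRPow_of_ne_zero _ dist_ne, natCast_dist, fbmCov]
    ring

-- A form of strong local nondeterminism of fractional Brownian motion.
lemma posSemidef_fbmCov_sub_smul_one {ι : Type*} [Finite ι] [DecidableEq ι] {p : ι → ℕ}
    (hp : p.Injective) (hp0 : ∀ i, p i ≠ 0) {H : ℝ} (hH0 : 0 < H) (hH : H ≤ 1 / 2) :
    (Matrix.of (fun i j => fbmCov H (p i) (p j)) - ((2 - 2 ^ (2 * H)) / 2 : ℝ) • 1).PosSemidef := by
  cases nonempty_fintype ι
  set c : ℝ := (2 - 2 ^ (2 * H)) / 2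
  have c_nonneg : 0 ≤ c := by
    have : (2 : ℝ) ^ (2 * H) ≤ 2 ^ (1 : ℝ) := by gcongr <;> linarith
    rw [rpow_one] at this
    simp only [c]
    linarith
  refine Matrix.PosSemidef.of_dotProduct_mulVec_nonneg ?_ fun a => ?_
  · ext i j
    simp [Matrix.one_apply, fbmCov_comm H (p i), eq_comm]
  have kernel_nonneg := sum_mul_concave_add_sub_dist_nonneg p
    (monotone_raisedRPow (s := 2 * H) (by linarith))
    (raisedRPow_add_two_add_le (s := 2 * H) (by linarith) (by linarith)) a
  have quadraticForm_eq : star a ⬝ᵥ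
      (Matrix.of (fun i j => fbmCov H (p i) (p j)) - c • (1 : Matrix ι ι ℝ)) *ᵥ a =
      (∑ i, ∑ j, a i * a j * (raisedRPow (2 * H) (p i) + raisedRPow (2 * H) (p j)
        - raisedRPow (2 * H) (Nat.dist (p i) (p j)) - raisedRPow (2 * H) 0)) / 2
        + c * (∑ i, a i) ^ 2 := by
    simp only [dotProduct, Matrix.mulVec, Matrix.sub_apply, Matrix.of_apply, Matrix.smul_apply,
      Matrix.one_apply, smul_eq_mul, star_trivial,
      fbmCov_natCast_sub_eq hp hp0 hH0.ne', c]
    rw [sq, Finset.sum_mul_sum, Finset.sum_div, Finset.mul_sum, ← Finset.sum_add_distrib]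
    refine Finset.sum_congr rfl fun i _ => ?_
    rw [Finset.sum_div, Finset.mul_sum, Finset.mul_sum, ← Finset.sum_add_distrib]
    exact Finset.sum_congr rfl fun j _ => by ring
  rw [quadraticForm_eq]
  positivity

end FractionalCovariance

section GaussianTails

open scoped NNReal

lemma hasDerivAt_gaussianPDFReal (m : ℝ) (v : ℝ≥0) (x : ℝ) :
    HasDerivAt (gaussianPDFReal m v) (-((x - m) / v * gaussianPDFReal m v x)) x := by
  have exponent : HasDerivAt (fun y : ℝ => -(y - m) ^ 2 / (2 * v)) (-((x - m) / v)) x := by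
    convert! ((((hasDerivAt_id x).sub_const m).pow 2).neg).div_const (2 * (v : ℝ)) using 1
    simp only [id, Nat.cast_ofNat, Nat.add_one_sub_one, pow_one, mul_one, ← mul_neg]
    rw [mul_div_mul_left _ _ two_ne_zero, neg_div]
  rw [gaussianPDFReal_def]
  convert! exponent.exp.const_mul (√(2 * π * v))⁻¹ using 1
  ring

lemma tendsto_gaussianPDFReal_atTop (m : ℝ) (v : ℝ≥0) :
    Tendsto (gaussianPDFReal m v) atTop (𝓝 0) := by
  rcases eq_or_ne v 0 with rfl | hv
  · rw [gaussianPDFReal_zero_var]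
    exact tendsto_const_nhds
  have sq_tendsto : Tendsto (fun x : ℝ => (x - m) ^ 2 / (2 * v)) atTop atTop :=
    ((tendsto_pow_atTop two_ne_zero).comp (tendsto_atTop_add_const_right _ (-m) tendsto_id)
      ).atTop_div_const (by positivity)
  have := (tendsto_exp_neg_atTop_nhds_zero.comp sq_tendsto).const_mul (√(2 * π * v))⁻¹
  simpa only [gaussianPDFReal_def, mul_zero, Function.comp_def, neg_div] using this

lemma integrable_fun_id_gaussianReal (m : ℝ) (v : ℝ≥0) :
    Integrable (fun x => x) (gaussianReal m v) :=
  (memLp_id_gaussianReal 1).integrable (by simp)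

lemma setIntegral_Ioi_sub_gaussianReal (m : ℝ) (v : ℝ≥0) (t : ℝ) :
    ∫ x in Ioi t, (x - m) ∂(gaussianReal m v) = v * gaussianPDFReal m v t := by
  rcases eq_or_ne v 0 with rfl | hv
  · rw [gaussianReal_zero_var, ← integral_indicator measurableSet_Ioi, integral_dirac]
    simp [indicator_apply]
  have deriv : ∀ x, HasDerivAt (fun y => -(v * gaussianPDFReal m v y))
      (gaussianPDFReal m v x * (x - m)) x := fun x => by
    convert! ((hasDerivAt_gaussianPDFReal m v x).const_mul (v : ℝ)).neg using 1
    field_simp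
  have integrable : Integrable (fun x => gaussianPDFReal m v x * (x - m)) := by
    have := (integrable_fun_id_gaussianReal m v).sub (integrable_const m)
    rw [gaussianReal_of_var_ne_zero _ hv, integrable_withDensity_iff_integrable_smul'
      (measurable_gaussianPDF m v) (.of_forall fun _ => gaussianPDF_lt_top)] at this
    simpa only [toReal_gaussianPDF, smul_eq_mul, Pi.sub_apply] using this
  have limit : Tendsto (fun y => -(v * gaussianPDFReal m v y)) atTop (𝓝 0) := by
    simpa only [mul_zero, neg_zero] using
      ((tendsto_gaussianPDFReal_atTop m v).const_mul (v : ℝ)).neg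
  rw [← integral_indicator measurableSet_Ioi, integral_gaussianReal_eq_integral_smul hv]
  simp_rw [smul_eq_mul, ← indicator_mul_right _ (gaussianPDFReal m v)]
  rw [integral_indicator measurableSet_Ioi, integral_Ioi_of_hasDerivAt_of_tendsto
    (deriv t).continuousAt.continuousWithinAt (fun x _ => deriv x) integrable.integrableOn limit]
  ring

lemma integral_abs_sub_gaussianReal (m : ℝ) (v : ℝ≥0) :
    ∫ x, |x - m| ∂(gaussianReal m v) = √(2 * v / π) := by
  have integrable : Integrable (fun x => x - m) (gaussianReal m v) :=
    (integrable_fun_id_gaussianReal m v).sub (integrable_const m)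
  have abs_eq : ∀ x, |x - m| = 2 * (Ioi m).indicator (fun y => y - m) x - (x - m) := by
    intro x
    rcases lt_or_ge m x with h | h
    · rw [indicator_of_mem (mem_Ioi.2 h), abs_of_pos (sub_pos.2 h)]
      ring
    · rw [indicator_of_notMem (notMem_Ioi.2 h), abs_of_nonpos (sub_nonpos.2 h)]
      ring
  have centered : ∫ x, (x - m) ∂(gaussianReal m v) = 0 := by
    rw [integral_sub (integrable_fun_id_gaussianReal m v) (integrable_const m),
      integral_id_gaussianReal]
    simp
  simp_rw [abs_eq]
  rw [integral_sub ((integrable.indicator measurableSet_Ioi).const_mul 2) integrable,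
    integral_const_mul, integral_indicator measurableSet_Ioi, setIntegral_Ioi_sub_gaussianReal,
    centered, sub_zero, gaussianPDFReal_def]
  rcases eq_or_ne v 0 with rfl | hv
  · simp
  have sqrt_sq : √(2 * π * v) ^ 2 = 2 * π * v := sq_sqrt (by positivity)
  rw [eq_comm, sqrt_eq_iff_eq_sq (by positivity) (by positivity)]
  simp only [sub_self, ne_eq, OfNat.ofNat_ne_zero, not_false_eq_true, zero_pow, neg_zero,
    zero_div, exp_zero, mul_one]
  rw [mul_pow, mul_pow, inv_pow, sqrt_sq]
  field_simp

variable {Ω : Type*} [MeasurableSpace Ω] {μ : Measure Ω} {Y : Ω → ℝ}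

lemma integral_abs_sub_integral_of_hasGaussianLaw (hY : HasGaussianLaw Y μ) :
    ∫ ω, |Y ω - μ[Y]| ∂μ = √(2 * Var[Y; μ] / π) := by
  have := integral_abs_sub_gaussianReal μ[Y] Var[Y; μ].toNNReal
  rwa [← hY.map_eq_gaussianReal, integral_map hY.aemeasurable (by fun_prop),
    coe_toNNReal _ (variance_nonneg _ _)] at this

end GaussianTails

section IndependentMaximum

lemma integrable_iSup_of_finite {Ω ι : Type*} [MeasurableSpace Ω] {μ : Measure Ω} [Finite ι]
    [Nonempty ι] {f : ι → Ω → ℝ} (hf : ∀ i, Integrable (f i) μ) :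
    Integrable (fun ω => ⨆ i, f i ω) μ := by
  cases nonempty_fintype ι
  have iSup_eq : (fun ω => ⨆ i, f i ω) = Finset.univ.sup' Finset.univ_nonempty f := by
    ext ω
    rw [Finset.sup'_apply, Finset.sup'_univ_eq_ciSup]
  rw [iSup_eq]
  exact Finset.sup'_induction (p := fun g => Integrable g μ) _ _
    (fun _ h₁ _ h₂ => h₁.sup h₂) fun i _ => hf i

lemma integral_iSup_comp_le_integral_iSup {Ω ι κ : Type*} [MeasurableSpace Ω] {μ : Measure Ω}
    [Finite ι] [Finite κ] [Nonempty κ] {X : ι → Ω → ℝ} (hX : ∀ i, Integrable (X i) μ) (g : κ → ι) :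
    ∫ ω, ⨆ l, X (g l) ω ∂μ ≤ ∫ ω, ⨆ i, X i ω ∂μ := by
  have : Nonempty ι := .map g inferInstance
  exact integral_mono (integrable_iSup_of_finite fun l => hX (g l)) (integrable_iSup_of_finite hX)
    fun ω => ciSup_le fun l => le_ciSup (f := (X · ω)) (finite_range _).bddAbove (g l)

variable {ν : Measure ℝ} [IsProbabilityMeasure ν]

lemma integrable_iSup_pi (hν : Integrable id ν) {ι : Type*} [Fintype ι] [Nonempty ι] :
    Integrable (fun x : ι → ℝ => ⨆ i, x i) (Measure.pi fun _ => ν) :=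
  integrable_iSup_of_finite fun i => integrable_eval (i := i) hν

lemma indicator_add_indicator_mul_iSup_le_iSup_insertNth {k : ℕ} (t x : ℝ)
    (y : Fin (k + 1) → ℝ) :
    (Ioi t).indicator id x * 1 + (Ioi t)ᶜ.indicator (fun _ => 1) x * ⨆ i, y i ≤
      ⨆ i, (MeasurableEquiv.piFinSuccAbove (fun _ : Fin (k + 2) => ℝ) 0).symm (x, y) i := by
  set z := (MeasurableEquiv.piFinSuccAbove (fun _ : Fin (k + 2) => ℝ) 0).symm (x, y)
  have bdd : BddAbove (range z) := (finite_range _).bddAbove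
  by_cases hx : x ∈ Ioi t
  · rw [indicator_of_mem hx, indicator_of_notMem (notMem_compl_iff.2 hx), id, mul_one, zero_mul,
      add_zero]
    exact le_ciSup bdd 0
  · rw [indicator_of_notMem hx, indicator_of_mem (mem_compl hx), zero_mul, zero_add, one_mul]
    exact ciSup_le fun i => le_ciSup bdd (Fin.succ i)

-- Bound the maximum below by coordinate `0` if that exceeds `t`, and by the maximum of the other
-- coordinates otherwise.
lemma setIntegral_Ioi_add_mul_integral_iSup_pi_le (hν : Integrable id ν) (k : ℕ) (t : ℝ) :
    ∫ x in Ioi t, x ∂ν + (1 - ν.real (Ioi t)) *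
        ∫ x, ⨆ i, x i ∂(Measure.pi fun _ : Fin (k + 1) => ν) ≤
      ∫ x, ⨆ i, x i ∂(Measure.pi fun _ : Fin (k + 2) => ν) := by
  set P := Measure.pi fun _ : Fin (k + 1) => ν
  have insert_preserving := (measurePreserving_piFinSuccAbove (fun _ : Fin (k + 2) => ν) 0).symm
  have kept : Integrable (fun z : ℝ × (Fin (k + 1) → ℝ) => (Ioi t).indicator id z.1 * 1)
      (ν.prod P) :=
    (hν.indicator measurableSet_Ioi).mul_prod (integrable_const 1)
  have dropped : Integrable (fun z : ℝ × (Fin (k + 1) → ℝ) =>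
      (Ioi t)ᶜ.indicator (fun _ => (1 : ℝ)) z.1 * ⨆ i, z.2 i) (ν.prod P) :=
    ((integrable_const 1).indicator measurableSet_Ioi.compl).mul_prod (integrable_iSup_pi hν)
  calc ∫ x in Ioi t, x ∂ν + (1 - ν.real (Ioi t)) * ∫ x, ⨆ i, x i ∂P
      = ∫ z : ℝ × (Fin (k + 1) → ℝ), ((Ioi t).indicator id z.1 * 1 +
          (Ioi t)ᶜ.indicator (fun _ => (1 : ℝ)) z.1 * ⨆ i, z.2 i) ∂(ν.prod P) := by
        rw [integral_add kept dropped, integral_prod_mul (Set.indicator _ _) fun _ => 1,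
          integral_prod_mul _ fun y : Fin (k + 1) → ℝ => ⨆ i, y i,
          integral_indicator measurableSet_Ioi, integral_indicator measurableSet_Ioi.compl,
          ← probReal_compl_eq_one_sub measurableSet_Ioi]
        simp
    _ ≤ ∫ z : ℝ × (Fin (k + 1) → ℝ),
          ⨆ i, (MeasurableEquiv.piFinSuccAbove (fun _ : Fin (k + 2) => ℝ) 0).symm z i
            ∂(ν.prod P) :=
        integral_mono (kept.add dropped)
          ((insert_preserving.integrable_comp_emb (MeasurableEquiv.measurableEmbedding _)).2
            (integrable_iSup_pi hν))
          fun z => indicator_add_indicator_mul_iSup_le_iSup_insertNth t z.1 z.2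
    _ = ∫ x, ⨆ i, x i ∂(Measure.pi fun _ : Fin (k + 2) => ν) :=
        insert_preserving.integral_comp' fun x : Fin (k + 2) → ℝ => ⨆ i, x i

lemma mul_measureReal_Ioi_le_setIntegral (hν : Integrable id ν) (t : ℝ) :
    t * ν.real (Ioi t) ≤ ∫ x in Ioi t, x ∂ν := by
  have := setIntegral_mono_on (integrable_const t).integrableOn hν.integrableOn
    (measurableSet_Ioi (a := t)) fun x hx => (mem_Ioi.1 hx).le
  rwa [setIntegral_const, smul_eq_mul, mul_comm] at this

lemma mul_one_sub_pow_le_integral_iSup_pi (hν : Integrable id ν) (hmean : ∫ x, x ∂ν = 0) {q t : ℝ}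
    (ht : 0 < t) (hq1 : q ≤ 1) (hq : ∫ x in Ioi t, x ∂ν = t * q) (k : ℕ) :
    t * (1 - (1 - q) ^ k) ≤ ∫ x, ⨆ i, x i ∂(Measure.pi fun _ : Fin (k + 1) => ν) := by
  have tail_le : ν.real (Ioi t) ≤ q :=
    le_of_mul_le_mul_left ((mul_measureReal_Ioi_le_setIntegral hν t).trans_eq hq) ht
  have q_nonneg : 0 ≤ q := measureReal_nonneg.trans tail_le
  induction k with
  | zero => simpa [integral_eval] using hmean.ge
  | succ k ih =>
    have bound_nonneg : 0 ≤ t * (1 - (1 - q) ^ k) :=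
      mul_nonneg ht.le (sub_nonneg.2 (pow_le_one₀ (by linarith) (by linarith)))
    calc t * (1 - (1 - q) ^ (k + 1)) = t * q + (1 - q) * (t * (1 - (1 - q) ^ k)) := by ring
      _ ≤ t * q + (1 - ν.real (Ioi t)) *
            ∫ x, ⨆ i, x i ∂(Measure.pi fun _ : Fin (k + 1) => ν) := by
          gcongr
          exact sub_nonneg.2 measureReal_le_one
      _ ≤ _ := hq ▸ setIntegral_Ioi_add_mul_integral_iSup_pi_le hν k t

end IndependentMaximum

section ConvexDomination

open scoped Matrix

lemma integral_le_integral_conv_of_convexOn {E : Type*} [NormedAddCommGroup E] [NormedSpace ℝ E]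
    [FiniteDimensional ℝ E] [MeasurableSpace E] [BorelSpace E] {ν ρ : Measure E} [SFinite ν]
    [IsProbabilityMeasure ρ] {f : E → ℝ} (hf : ConvexOn ℝ univ f) (hρ : Integrable id ρ)
    (hmean : ∫ y, y ∂ρ = 0) (hν : Integrable f ν) (hconv : Integrable f (ν ∗ ρ)) :
    ∫ x, f x ∂ν ≤ ∫ x, f x ∂(ν ∗ ρ) := by
  have : CompleteSpace E := FiniteDimensional.complete ℝ E
  have shift_integrable := ((integrable_conv_iff hconv.1).1 hconv).1
  have fiber_integrable : Integrable (fun x => ∫ y, f (x + y) ∂ρ) ν :=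
    ((integrable_map_measure hconv.1 (by fun_prop)).1 hconv).integral_prod_left
  rw [integral_conv hconv]
  refine integral_mono_ae hν fiber_integrable ?_
  filter_upwards [shift_integrable] with x hx
  have mean_shift : ∫ y, (x + y) ∂ρ = x := by
    rw [integral_add (f := fun _ => x) (g := fun y => y) (integrable_const x) hρ, hmean]
    simp
  calc f x = f (∫ y, (x + y) ∂ρ) := by rw [mean_shift]
    _ ≤ ∫ y, f (x + y) ∂ρ :=
      hf.map_integral_le hf.locallyLipschitz.continuous.continuousOn isClosed_univ
        (.of_forall fun _ => mem_univ _) ((integrable_const x).add hρ) hx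

variable {ι : Type*}

lemma convexOn_iSup_apply [Finite ι] [Nonempty ι] :
    ConvexOn ℝ univ fun x : EuclideanSpace ℝ ι => ⨆ i, x i := by
  refine ⟨convex_univ, fun x _ y _ a b ha hb _ => ciSup_le fun i => ?_⟩
  have bdd (z : EuclideanSpace ℝ ι) : BddAbove (range z) := (finite_range _).bddAbove
  simp only [PiLp.add_apply, PiLp.smul_apply, smul_eq_mul]
  gcongr
  exacts [le_ciSup (bdd x) i, le_ciSup (bdd y) i]

lemma integrable_iSup_apply_of_isGaussian [Finite ι] [Nonempty ι]
    (P : Measure (EuclideanSpace ℝ ι)) [IsGaussian P] :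
    Integrable (fun x : EuclideanSpace ℝ ι => ⨆ i, x i) P := by
  cases nonempty_fintype ι
  exact integrable_iSup_of_finite fun i => IsGaussian.integrable_dual P (EuclideanSpace.proj i)

variable [Fintype ι] [DecidableEq ι]

lemma multivariateGaussian_conv {S T : Matrix ι ι ℝ} (hS : S.PosSemidef) (hT : T.PosSemidef)
    (x y : EuclideanSpace ℝ ι) :
    multivariateGaussian x S ∗ multivariateGaussian y T = multivariateGaussian (x + y) (S + T) := by
  refine Measure.ext_of_charFun (funext fun t => ?_)
  rw [charFun_conv, charFun_multivariateGaussian hS, charFun_multivariateGaussian hT,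
    charFun_multivariateGaussian (hS.add hT), ← Complex.exp_add, inner_add_right,
    Matrix.add_mulVec, dotProduct_add]
  congr 1
  push_cast
  ring

lemma integral_multivariateGaussian_mono_of_convexOn {S T : Matrix ι ι ℝ} (hS : S.PosSemidef)
    (hST : (T - S).PosSemidef) (x : EuclideanSpace ℝ ι) {f : EuclideanSpace ℝ ι → ℝ}
    (hf : ConvexOn ℝ univ f) (hfS : Integrable f (multivariateGaussian x S))
    (hfT : Integrable f (multivariateGaussian x T)) :
    ∫ y, f y ∂(multivariateGaussian x S) ≤ ∫ y, f y ∂(multivariateGaussian x T) := by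
  have conv_eq : multivariateGaussian x S ∗ multivariateGaussian 0 (T - S) =
      multivariateGaussian x T := by
    rw [multivariateGaussian_conv hS hST, add_zero, add_sub_cancel]
  rw [← conv_eq] at hfT ⊢
  exact integral_le_integral_conv_of_convexOn hf IsGaussian.integrable_id
    integral_id_multivariateGaussian hfS hfT

lemma map_smul_multivariateGaussian {S : Matrix ι ι ℝ} (hS : S.PosSemidef) (c : ℝ)
    (x : EuclideanSpace ℝ ι) :
    (multivariateGaussian x S).map (c • ·) = multivariateGaussian (c • x) (c ^ 2 • S) := by
  have scaled_posSemidef : (c ^ 2 • S).PosSemidef := hS.smul (sq_nonneg c)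
  refine Measure.ext_of_charFun (funext fun t => ?_)
  rw [charFun_map_smul, charFun_multivariateGaussian hS,
    charFun_multivariateGaussian scaled_posSemidef, real_inner_smul_left, real_inner_smul_right]
  simp only [WithLp.ofLp_smul, Matrix.mulVec_smul, Matrix.smul_mulVec, dotProduct_smul,
    smul_dotProduct, smul_eq_mul, ← mul_assoc, sq]

lemma integral_iSup_multivariateGaussian_sq_smul_one {σ : ℝ} (hσ : 0 ≤ σ) :
    ∫ x, ⨆ i, x i ∂(multivariateGaussian 0 (σ ^ 2 • (1 : Matrix ι ι ℝ))) =
      σ * ∫ x, ⨆ i, x i ∂(Measure.pi fun _ : ι => gaussianReal 0 1) := by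
  have sup_measurable : Measurable fun x : EuclideanSpace ℝ ι => ⨆ i, x i :=
    Measurable.iSup fun i => by fun_prop
  rw [← smul_zero σ, ← map_smul_multivariateGaussian Matrix.PosSemidef.one,
    multivariateGaussian_zero_one, ← map_pi_eq_stdGaussian,
    Measure.map_map (by fun_prop) (by fun_prop),
    integral_map (by fun_prop) sup_measurable.aestronglyMeasurable, ← integral_const_mul]
  simp [Real.mul_iSup_of_nonneg hσ]

end ConvexDomination

section GaussianVectors

open scoped Matrix

variable {Ω ι : Type*} [MeasurableSpace Ω] {μ : Measure Ω} {X : ι → Ω → ℝ}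

/-- The covariance matrix `(cov[X i, X j])` of a finite family of random variables. -/
def covarianceMatrix (X : ι → Ω → ℝ) (μ : Measure Ω) : Matrix ι ι ℝ :=
  Matrix.of fun i j => cov[X i, X j; μ]

lemma dotProduct_covarianceMatrix_mulVec [Fintype ι] [IsFiniteMeasure μ]
    (hX : ∀ i, MemLp (X i) 2 μ) (x y : EuclideanSpace ℝ ι) :
    x ⬝ᵥ covarianceMatrix X μ *ᵥ y =
      covarianceBilin (μ.map fun ω => WithLp.toLp 2 (X · ω)) x y := by
  rw [covarianceBilin_apply_pi hX]
  simp only [dotProduct, Matrix.mulVec, covarianceMatrix, Matrix.of_apply, Finset.mul_sum]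
  exact Finset.sum_congr rfl fun i _ => Finset.sum_congr rfl fun j _ => by ring

lemma posSemidef_covarianceMatrix [Finite ι] [IsFiniteMeasure μ]
    (hX : ∀ i, MemLp (X i) 2 μ) : (covarianceMatrix X μ).PosSemidef := by
  cases nonempty_fintype ι
  refine Matrix.PosSemidef.of_dotProduct_mulVec_nonneg ?_ fun c => ?_
  · ext i j
    exact covariance_comm _ _
  · rw [star_trivial]
    exact (dotProduct_covarianceMatrix_mulVec hX (WithLp.toLp 2 c) (WithLp.toLp 2 c)).symm ▸
      covarianceBilin_self_nonneg _

lemma map_toLp_eq_multivariateGaussian [Fintype ι] [DecidableEq ι]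
    (hX : HasGaussianLaw (fun ω => (X · ω)) μ) :
    μ.map (fun ω => WithLp.toLp 2 (X · ω)) =
      multivariateGaussian (WithLp.toLp 2 fun i => μ[X i]) (covarianceMatrix X μ) := by
  have := hX.isProbabilityMeasure
  have := (hX.toLp_pi 2).isGaussian_map
  have memLp (i : ι) : MemLp (X i) 2 μ := (hX.eval i).memLp_two
  refine IsGaussian.ext ?_ ?_
  · rw [integral_id_multivariateGaussian', integral_map (hX.toLp_pi 2).aemeasurable (by fun_prop)]
    ext i
    exact eval_integral_piLp (f := fun ω => WithLp.toLp 2 (X · ω))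
      (fun i => (hX.eval i).integrable) i
  · ext x y
    rw [covarianceBilin_multivariateGaussian (posSemidef_covarianceMatrix memLp),
      dotProduct_covarianceMatrix_mulVec memLp]

lemma integrable_iSup_of_hasGaussianLaw [Finite ι] [Nonempty ι]
    (hX : HasGaussianLaw (fun ω => (X · ω)) μ) : Integrable (fun ω => ⨆ i, X i ω) μ :=
  integrable_iSup_of_finite fun i => (hX.eval i).integrable

lemma integral_iSup_eq_integral_multivariateGaussian [Fintype ι] [DecidableEq ι]
    (hX : HasGaussianLaw (fun ω => (X · ω)) μ) :
    ∫ ω, ⨆ i, X i ω ∂μ = ∫ x, ⨆ i, x i ∂(multivariateGaussian (WithLp.toLp 2 fun i => μ[X i])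
      (covarianceMatrix X μ)) := by
  have sup_measurable : Measurable fun x : EuclideanSpace ℝ ι => ⨆ i, x i :=
    Measurable.iSup fun i => by fun_prop
  rw [← map_toLp_eq_multivariateGaussian hX,
    integral_map (hX.toLp_pi 2).aemeasurable sup_measurable.aestronglyMeasurable]

lemma mul_integral_iSup_pi_le_of_posSemidef_sub [Fintype ι] [Nonempty ι] [DecidableEq ι]
    (hX : HasGaussianLaw (fun ω => (X · ω)) μ) (hmean : ∀ i, μ[X i] = 0) {σ : ℝ} (hσ : 0 ≤ σ)
    (hcov : (covarianceMatrix X μ - σ ^ 2 • 1).PosSemidef) :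
    σ * ∫ x, ⨆ i, x i ∂(Measure.pi fun _ : ι => gaussianReal 0 1) ≤ ∫ ω, ⨆ i, X i ω ∂μ := by
  rw [integral_iSup_eq_integral_multivariateGaussian hX,
    ← integral_iSup_multivariateGaussian_sq_smul_one hσ, funext hmean]
  exact integral_multivariateGaussian_mono_of_convexOn (Matrix.PosSemidef.one.smul (sq_nonneg σ))
    hcov 0 convexOn_iSup_apply (integrable_iSup_apply_of_isGaussian _)
    (integrable_iSup_apply_of_isGaussian _)

lemma integral_iSup_neg_of_hasGaussianLaw [Finite ι]
    (hX : HasGaussianLaw (fun ω => (X · ω)) μ) (hmean : ∀ i, μ[X i] = 0) :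
    ∫ ω, ⨆ i, -X i ω ∂μ = ∫ ω, ⨆ i, X i ω ∂μ := by
  classical
  cases nonempty_fintype ι
  have neg_mean (i : ι) : ∫ ω, -X i ω ∂μ = 0 := by rw [integral_neg, hmean, neg_zero]
  have neg_cov : covarianceMatrix (fun i ω => -X i ω) μ = covarianceMatrix X μ := by
    ext i j
    simp only [covarianceMatrix, Matrix.of_apply, covariance_fun_neg_left,
      covariance_fun_neg_right, neg_neg]
  rw [integral_iSup_eq_integral_multivariateGaussian (X := fun i ω => -X i ω) hX.fun_neg,
    integral_iSup_eq_integral_multivariateGaussian hX, neg_cov, funext hmean, funext neg_mean]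

lemma abs_sub_add_abs_sub_add_abs_sub_le_iSup [Finite ι] (x : ι → ℝ) (i j k : ι) :
    |x i - x j| + |x j - x k| + |x i - x k| ≤ 2 * ((⨆ i, x i) + ⨆ i, -x i) := by
  have le_sup : ∀ l, x l ≤ ⨆ i, x i := le_ciSup (finite_range _).bddAbove
  have neg_le_sup : ∀ l, -x l ≤ ⨆ i, -x i := le_ciSup (finite_range _).bddAbove
  rcases abs_cases (x i - x j) with h₁ | h₁ <;> rcases abs_cases (x j - x k) with h₂ | h₂ <;>
    rcases abs_cases (x i - x k) with h₃ | h₃ <;>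
    linarith [le_sup i, le_sup j, le_sup k, neg_le_sup i, neg_le_sup j, neg_le_sup k]

lemma integral_abs_sub_of_hasGaussianLaw [Finite ι]
    (hX : HasGaussianLaw (fun ω => (X · ω)) μ) (hmean : ∀ i, μ[X i] = 0) (i j : ι) :
    ∫ ω, |X i ω - X j ω| ∂μ = √(2 / π) * √(Var[X i - X j; μ]) := by
  have mean_sub : μ[X i - X j] = 0 := by
    rw [integral_sub' (hX.eval i).integrable (hX.eval j).integrable, hmean, hmean, sub_zero]
  have := integral_abs_sub_integral_of_hasGaussianLaw (hX.prodMk i j).sub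
  rw [mean_sub] at this
  simpa only [Pi.sub_apply, sub_zero, mul_div_right_comm, sqrt_mul (by positivity : 0 ≤ 2 / π)]
    using this

lemma sqrt_variance_add_le_integral_iSup [Finite ι]
    (hX : HasGaussianLaw (fun ω => (X · ω)) μ) (hmean : ∀ i, μ[X i] = 0) (i j k : ι) :
    √(2 / π) / 4 * (√(Var[X i - X j; μ]) + √(Var[X j - X k; μ]) + √(Var[X i - X k; μ])) ≤
      ∫ ω, ⨆ i, X i ω ∂μ := by
  have : Nonempty ι := ⟨i⟩
  cases nonempty_fintype ι
  have abs_integrable (a b : ι) : Integrable (fun ω => |X a ω - X b ω|) μ :=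
    ((hX.eval a).integrable.sub (hX.eval b).integrable).abs
  have sup_integrable := integrable_iSup_of_hasGaussianLaw hX
  have neg_sup_integrable : Integrable (fun ω => ⨆ i, -X i ω) μ :=
    integrable_iSup_of_hasGaussianLaw (X := fun i ω => -X i ω) hX.fun_neg
  have ij_jk_integrable : Integrable (fun ω => |X i ω - X j ω| + |X j ω - X k ω|) μ :=
    (abs_integrable i j).add (abs_integrable j k)
  have range_bound : ∫ ω, (|X i ω - X j ω| + |X j ω - X k ω| + |X i ω - X k ω|) ∂μ ≤
      ∫ ω, 2 * ((⨆ i, X i ω) + ⨆ i, -X i ω) ∂μ :=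
    integral_mono (ij_jk_integrable.add (abs_integrable i k))
      ((sup_integrable.add neg_sup_integrable).const_mul 2)
      fun ω => abs_sub_add_abs_sub_add_abs_sub_le_iSup (X · ω) i j k
  rw [integral_const_mul, integral_add sup_integrable neg_sup_integrable,
    integral_iSup_neg_of_hasGaussianLaw hX hmean,
    integral_add ij_jk_integrable (abs_integrable i k),
    integral_add (abs_integrable i j) (abs_integrable j k)] at range_bound
  simp only [integral_abs_sub_of_hasGaussianLaw hX hmean] at range_bound
  linarith

end GaussianVectors

section FractionalBrownianMotion

variable {Ω : Type} [MeasurableSpace Ω] {μ : Measure Ω}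

namespace IsCenteredGaussianOn

variable {X : ℝ → Ω → ℝ} {S : Set ℝ}

lemma hasGaussianLaw (hX : IsCenteredGaussianOn μ X S) {k : ℕ} {t : Fin k → ℝ}
    (ht : ∀ i, t i ∈ S) : HasGaussianLaw (fun ω i => X (t i) ω) μ := by
  have measurable_X : Measurable fun ω i => X (t i) ω :=
    measurable_pi_lambda _ fun i => hX.1 _ (ht i)
  refine ⟨isGaussian_of_map_eq_gaussianReal fun L => ⟨0, ?_⟩⟩
  obtain ⟨v, hv⟩ := hX.2 k (fun i => L (Pi.single i 1)) t ht
  refine ⟨v, ?_⟩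
  rw [Measure.map_map (by fun_prop) measurable_X, ← hv]
  congr 1 with ω
  rw [Function.comp_apply, ← Finset.univ_sum_single fun i => X (t i) ω, map_sum]
  refine Finset.sum_congr rfl fun i _ => ?_
  calc L (Pi.single i (X (t i) ω)) = L (X (t i) ω • Pi.single i 1) := by
        rw [← Pi.single_smul, smul_eq_mul, mul_one]
    _ = L (Pi.single i 1) * X (t i) ω := by rw [map_smul, smul_eq_mul, mul_comm]

lemma hasGaussianLaw_eval (hX : IsCenteredGaussianOn μ X S) {t : ℝ} (ht : t ∈ S) :
    HasGaussianLaw (X t) μ :=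
  (hX.hasGaussianLaw (t := fun _ : Fin 1 => t) fun _ => ht).eval 0

lemma integral_eq_zero (hX : IsCenteredGaussianOn μ X S) {t : ℝ} (ht : t ∈ S) : μ[X t] = 0 := by
  obtain ⟨v, hv⟩ := hX.2 1 1 (fun _ => t) fun _ => ht
  have law_eq : μ.map (X t) = gaussianReal 0 v := by simpa using hv
  calc μ[X t] = ∫ x, x ∂(μ.map (X t)) :=
        (integral_map (hX.1 t ht).aemeasurable aestronglyMeasurable_id).symm
    _ = 0 := by rw [law_eq, integral_id_gaussianReal]

end IsCenteredGaussianOn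

namespace IsFBM

variable {H : ℝ} {B : ℝ → Ω → ℝ}

lemma covariance_eq (hB : IsFBM μ H B) {s t : ℝ} (hs : 0 ≤ s) (ht : 0 ≤ t) :
    cov[B s, B t; μ] = fbmCov H s t := by
  have law_s := hB.1.hasGaussianLaw_eval hs
  have := law_s.isProbabilityMeasure
  rw [covariance_eq_sub law_s.memLp_two (hB.1.hasGaussianLaw_eval ht).memLp_two,
    hB.1.integral_eq_zero hs, zero_mul, sub_zero]
  exact hB.2.2.2 s t hs ht

lemma variance_eq (hB : IsFBM μ H B) (hH : H ≠ 0) {t : ℝ} (ht : 0 ≤ t) :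
    Var[B t; μ] = t ^ (2 * H) := by
  rw [← covariance_self (hB.1.1 t ht).aemeasurable, hB.covariance_eq ht ht, fbmCov_self hH]

lemma sqrt_variance_sub_eq (hB : IsFBM μ H B) (hH : H ≠ 0) {s t : ℝ} (hs : 0 ≤ s) (ht : 0 ≤ t) :
    √(Var[B s - B t; μ]) = |t - s| ^ H := by
  have law_s := hB.1.hasGaussianLaw_eval hs
  have := law_s.isProbabilityMeasure
  have variance_sub_eq : Var[B s - B t; μ] = (|t - s| ^ H) ^ 2 := by
    rw [variance_sub law_s.memLp_two (hB.1.hasGaussianLaw_eval ht).memLp_two,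
      hB.variance_eq hH hs, hB.variance_eq hH ht, hB.covariance_eq hs ht, fbmCov,
      ← rpow_mul_natCast (abs_nonneg _)]
    push_cast
    rw [mul_comm H]
    ring
  rw [variance_sub_eq, sqrt_sq (by positivity)]

lemma three_point_le_expMaxGrid (hB : IsFBM μ H B) (hH : H ≠ 0) {k n : ℕ} (hn : n ≠ 0)
    (hk : k ≤ n) :
    √(2 / π) / 4 * ((k / n : ℝ) ^ H + (1 - k / n : ℝ) ^ H + 1) ≤ expMaxGrid μ B n := by
  have grid_nonneg (i : Fin (n + 1)) : (0 : ℝ) ≤ (i : ℕ) / n := by positivity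
  have three_point := sqrt_variance_add_le_integral_iSup (hB.1.hasGaussianLaw grid_nonneg)
    (fun i => hB.1.integral_eq_zero (grid_nonneg i)) 0 ⟨k, Nat.lt_succ_of_le hk⟩ (Fin.last n)
  have fraction_nonneg : (0 : ℝ) ≤ k / n := by positivity
  have fraction_le_one : (k / n : ℝ) ≤ 1 := div_le_one_of_le₀ (mod_cast hk) (by positivity)
  rw [hB.sqrt_variance_sub_eq hH (grid_nonneg _) (grid_nonneg _),
    hB.sqrt_variance_sub_eq hH (grid_nonneg _) (grid_nonneg _),
    hB.sqrt_variance_sub_eq hH (grid_nonneg _) (grid_nonneg _)] at three_point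
  simpa [hn, abs_of_nonneg fraction_nonneg, abs_of_nonneg (sub_nonneg.2 fraction_le_one),
    expMaxGrid] using three_point

lemma expMaxGrid_nonneg (hB : IsFBM μ H B) (hH : H ≠ 0) {n : ℕ} (hn : n ≠ 0) :
    0 ≤ expMaxGrid μ B n := by
  refine le_trans ?_ (hB.three_point_le_expMaxGrid hH hn le_rfl)
  rw [div_self (Nat.cast_ne_zero.2 hn), sub_self]
  positivity

lemma integral_iSup_arithmetic_le_expMaxGrid (hB : IsFBM μ H B) {k d n : ℕ} (h : (k + 1) * d ≤ n) :
    ∫ ω, ⨆ i : Fin (k + 1), B (((i + 1 : ℕ) : ℝ) * (d / n)) ω ∂μ ≤ expMaxGrid μ B n := by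
  have index_lt (i : Fin (k + 1)) : (i + 1) * d < n + 1 :=
    Nat.lt_succ_of_le ((Nat.mul_le_mul_right d i.2).trans h)
  have subfamily := integral_iSup_comp_le_integral_iSup (μ := μ)
    (X := fun (i : Fin (n + 1)) => B ((i : ℕ) / n))
    (fun i => (hB.1.hasGaussianLaw_eval (by positivity : (0 : ℝ) ≤ (i : ℕ) / n)).integrable)
    fun i : Fin (k + 1) => ⟨(i + 1) * d, index_lt i⟩
  simpa only [expMaxGrid, Nat.cast_mul, mul_div_assoc] using subfamily

lemma posSemidef_covarianceMatrix_arithmetic_sub (hB : IsFBM μ H B) (hH0 : 0 < H) (hH : H ≤ 1 / 2)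
    (k : ℕ) {δ : ℝ} (hδ : 0 ≤ δ) :
    (covarianceMatrix (fun i : Fin (k + 1) => B (((i + 1 : ℕ) : ℝ) * δ)) μ -
      (δ ^ H * √((2 - 2 ^ (2 * H)) / 2)) ^ 2 • 1).PosSemidef := by
  have pow_le_two : (2 : ℝ) ^ (2 * H) ≤ 2 := by
    simpa using rpow_le_rpow_of_exponent_le one_le_two (by linarith : 2 * H ≤ 1)
  have unit_spacing := posSemidef_fbmCov_sub_smul_one (p := fun i : Fin (k + 1) => (i : ℕ) + 1)
    (fun i j hij => Fin.ext (Nat.succ_injective hij)) (fun i => Nat.succ_ne_zero i) hH0 hH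
  convert unit_spacing.smul (rpow_nonneg hδ (2 * H)) using 1
  have scale_sq : (δ ^ H * √((2 - 2 ^ (2 * H)) / 2)) ^ 2 =
      δ ^ (2 * H) * ((2 - 2 ^ (2 * H)) / 2) := by
    rw [mul_pow, sq_sqrt (by linarith), ← rpow_mul_natCast hδ, Nat.cast_ofNat, mul_comm H]
  rw [scale_sq, smul_sub, smul_smul]
  congr 1
  ext i j
  simp only [covarianceMatrix, Matrix.of_apply, Matrix.smul_apply, smul_eq_mul]
  rw [hB.covariance_eq (by positivity) (by positivity),
    fbmCov_mul_mul H hδ (by positivity) (by positivity)]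

lemma spaced_level_le_expMaxGrid (hB : IsFBM μ H B) (hH0 : 0 < H) (hH : H ≤ 1 / 2) {k d n : ℕ}
    (h : (k + 1) * d ≤ n) {t : ℝ} (ht : 0 < t) (hpdf : gaussianPDFReal 0 1 t ≤ t) :
    (d / n : ℝ) ^ H * √((2 - 2 ^ (2 * H)) / 2) * (t * (1 - (1 - gaussianPDFReal 0 1 t / t) ^ k)) ≤
      expMaxGrid μ B n := by
  have tail_mean : ∫ x in Ioi t, x ∂(gaussianReal 0 1) = t * (gaussianPDFReal 0 1 t / t) := by
    simpa [mul_div_cancel₀ _ ht.ne'] using setIntegral_Ioi_sub_gaussianReal 0 1 t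
  have times_nonneg (i : Fin (k + 1)) : (0 : ℝ) ≤ ((i + 1 : ℕ) : ℝ) * (d / n) := by positivity
  calc _ ≤ (d / n : ℝ) ^ H * √((2 - 2 ^ (2 * H)) / 2) *
        ∫ x, ⨆ i, x i ∂(Measure.pi fun _ : Fin (k + 1) => gaussianReal 0 1) := by
        gcongr
        exact mul_one_sub_pow_le_integral_iSup_pi (IsGaussian.integrable_id)
          integral_id_gaussianReal ht ((div_le_one ht).2 hpdf) tail_mean k
    _ ≤ ∫ ω, ⨆ i : Fin (k + 1), B (((i + 1 : ℕ) : ℝ) * (d / n)) ω ∂μ :=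
        mul_integral_iSup_pi_le_of_posSemidef_sub (hB.1.hasGaussianLaw times_nonneg)
          (fun i => hB.1.integral_eq_zero (times_nonneg i)) (by positivity)
          (hB.posSemidef_covarianceMatrix_arithmetic_sub hH0 hH k (by positivity))
    _ ≤ expMaxGrid μ B n := hB.integral_iSup_arithmetic_le_expMaxGrid h

end IsFBM

end FractionalBrownianMotion

section NumericalBounds

lemma le_exp_of_pow_le {a x : ℝ} {p q : ℕ} (hq : q ≠ 0) (hx : (p : ℝ) ≤ q * x)
    (h : a ^ q ≤ 2.7182818283 ^ p) : a ≤ exp x := by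
  refine le_of_pow_le_pow_left₀ hq (exp_pos x).le ?_
  calc a ^ q ≤ 2.7182818283 ^ p := h
    _ ≤ exp 1 ^ p := by gcongr; exact exp_one_gt_d9.le
    _ = exp p := by rw [← exp_nat_mul, mul_one]
    _ ≤ exp (q * x) := exp_le_exp.2 hx
    _ = exp x ^ q := exp_nat_mul x q

lemma exp_le_of_le_pow {a x : ℝ} (ha : 0 ≤ a) {p q : ℕ} (hq : q ≠ 0) (hx : q * x ≤ (p : ℝ))
    (h : 2.7182818286 ^ p ≤ a ^ q) : exp x ≤ a := by
  refine le_of_pow_le_pow_left₀ hq ha ?_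
  calc exp x ^ q = exp (q * x) := (exp_nat_mul x q).symm
    _ ≤ exp p := exp_le_exp.2 hx
    _ = exp 1 ^ p := by rw [← exp_nat_mul, mul_one]
    _ ≤ 2.7182818286 ^ p := by gcongr; exact exp_one_lt_d9.le
    _ ≤ a ^ q := h

lemma le_sqrt_two_div_pi : 0.7976 ≤ √(2 / π) := by
  refine le_sqrt_of_sq_le ((le_div_iff₀ pi_pos).2 ?_)
  linarith [pi_lt_d4]

lemma gaussianPDFReal_zero_one_eq (t : ℝ) :
    gaussianPDFReal 0 1 t = √(2 / π) / 2 * exp (-t ^ 2 / 2) := by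
  have const_eq : (√(2 * π))⁻¹ = √(2 / π) / 2 := by
    rw [← sqrt_inv, eq_div_iff two_ne_zero, ← sqrt_sq (zero_le_two (α := ℝ)),
      ← sqrt_mul (by positivity), sqrt_sq zero_le_two]
    congr 1
    field_simp
  rw [← const_eq]
  simp [gaussianPDFReal]

lemma gaussianPDFReal_zero_one_le_one (t : ℝ) : gaussianPDFReal 0 1 t ≤ 1 := by
  have sqrt_le_one : √(2 / π) ≤ 1 :=
    sqrt_le_one.2 ((div_le_one pi_pos).2 two_le_pi)
  have exp_le_one : exp (-t ^ 2 / 2) ≤ 1 := exp_le_one_iff.2 (by nlinarith [sq_nonneg t])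
  rw [gaussianPDFReal_zero_one_eq]
  exact mul_le_one₀ (by linarith) (exp_pos _).le exp_le_one

lemma one_div_five_mul_sqrt_le {H a : ℝ} (ha : 0 < a) (h : 0.04 / a ^ 2 ≤ H) :
    1 / (5 * √H) ≤ a := by
  have sqrt_ge : 0.2 / a ≤ √H := le_sqrt_of_sq_le (by rw [div_pow]; norm_num at h ⊢; exact h)
  have root_pos : 0 < √H := lt_of_lt_of_le (by positivity) sqrt_ge
  rw [div_le_iff₀ ha] at sqrt_ge
  rw [div_le_iff₀ (by positivity)]
  linarith

lemma one_div_five_mul_sqrt_le_of_rpow_le {H : ℝ} (hH : 0 < H) {n : ℕ}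
    (hn : (2 : ℝ) ^ (1 / H) ≤ n) (hpow : (n : ℝ) ^ H ≤ 16) :
    1 / (5 * √H) ≤ 6 * √(log n) / (n : ℝ) ^ H := by
  have n_pos : (0 : ℝ) < n := lt_of_lt_of_le (by positivity) hn
  have log_ge : 0.64 / H ≤ log n :=
    calc 0.64 / H ≤ log 2 / H := by gcongr; linarith [log_two_gt_d9]
      _ = log (2 ^ (1 / H)) := by rw [log_rpow two_pos, one_div_mul_eq_div]
      _ ≤ log n := log_le_log (by positivity) hn
  have sqrt_log_ge : 0.8 / √H ≤ √(log n) := by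
    refine le_sqrt_of_sq_le (le_of_eq_of_le ?_ log_ge)
    rw [div_pow, sq_sqrt hH.le]
    norm_num
  calc 1 / (5 * √H) = 0.2 * (1 / √H) := by field_simp; norm_num
    _ ≤ 0.3 * (1 / √H) := by gcongr; norm_num
    _ = 6 * (0.8 / √H) / 16 := by ring
    _ ≤ 6 * √(log n) / (n : ℝ) ^ H := by gcongr

end NumericalBounds

section ThreePointRegime

lemma half_div_mem_Icc {n : ℕ} (hn : 16 ≤ n) : ((n / 2 : ℕ) : ℝ) / n ∈ Icc (15 / 32) (17 / 32) := by
  have n_ge : (16 : ℝ) ≤ n := mod_cast hn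
  have lower : (n : ℝ) ≤ 2 * (n / 2 : ℕ) + 1 := mod_cast (by lia : n ≤ 2 * (n / 2) + 1)
  have upper : 2 * ((n / 2 : ℕ) : ℝ) ≤ n := mod_cast (by lia : 2 * (n / 2) ≤ n)
  constructor
  · rw [le_div_iff₀ (by linarith)]
    linarith
  · rw [div_le_iff₀ (by linarith)]
    linarith

lemma le_rpow_of_le_twenty_seven_hundredths {H : ℝ} (hH : H ≤ 0.27) :
    (0.81 : ℝ) ≤ (15 / 32) ^ H := by
  have pow_eq : ((15 / 32 : ℝ) ^ (0.27 : ℝ)) ^ 100 = (15 / 32) ^ 27 := by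
    rw [← rpow_mul_natCast (by norm_num), ← rpow_natCast]
    norm_num
  calc (0.81 : ℝ) ≤ (15 / 32) ^ (0.27 : ℝ) :=
        le_of_pow_le_pow_left₀ (n := 100) (by norm_num) (by positivity) (by rw [pow_eq]; norm_num)
    _ ≤ (15 / 32) ^ H := rpow_le_rpow_of_exponent_ge (by norm_num) (by norm_num) hH

lemma one_div_five_mul_sqrt_sub_le_three_point {H u : ℝ} (hH : 1 / 7 ≤ H) (hH1 : H ≤ 1)
    (hu : u ∈ Icc (15 / 32) (17 / 32)) :
    1 / (5 * √H) - 0.0107 ≤ √(2 / π) / 4 * (u ^ H + (1 - u) ^ H + 1) := by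
  have left_ge : (15 / 32) ^ H ≤ u ^ H := by
    gcongr
    exact hu.1
  have right_ge : (15 / 32) ^ H ≤ (1 - u) ^ H := by
    gcongr
    linarith [hu.2]
  have three_point_ge {b : ℝ} (hb : 0 ≤ b) (hbH : b ≤ (15 / 32) ^ H) :
      0.1994 * (2 * b + 1) ≤ √(2 / π) / 4 * (u ^ H + (1 - u) ^ H + 1) :=
    mul_le_mul (by linarith [le_sqrt_two_div_pi]) (by linarith) (by linarith) (by positivity)
  rcases le_total H 0.27 with h | h
  · have main_le := one_div_five_mul_sqrt_le (H := H) (a := 0.53) (by norm_num)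
      (le_trans (by norm_num) hH)
    linarith [three_point_ge (by norm_num) (le_rpow_of_le_twenty_seven_hundredths h)]
  · have main_le := one_div_five_mul_sqrt_le (H := H) (a := 0.386) (by norm_num)
      (le_trans (by norm_num) h)
    have base_le : (15 / 32 : ℝ) ≤ (15 / 32) ^ H :=
      self_le_rpow_of_le_one (by norm_num) (by norm_num) hH1
    linarith [three_point_ge (by norm_num) base_le]

lemma IsFBM.one_div_five_mul_sqrt_sub_le_expMaxGrid {Ω : Type} [MeasurableSpace Ω] {μ : Measure Ω}
    {H : ℝ} {B : ℝ → Ω → ℝ} (hB : IsFBM μ H B) (hH : 1 / 7 ≤ H) (hH1 : H ≤ 1) {n : ℕ}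
    (hn : 16 ≤ n) : 1 / (5 * √H) - 0.0107 ≤ expMaxGrid μ B n :=
  (one_div_five_mul_sqrt_sub_le_three_point hH hH1 (half_div_mem_Icc hn)).trans
    (hB.three_point_le_expMaxGrid (by linarith) (by lia) (Nat.div_le_self n 2))

end ThreePointRegime

section SpacedRegime

-- Here `x = 1 / H`; there will be `⌊exp (x / 2)⌋₊ + 1` times, compared with the level `0.6 * √x`.
lemma mul_sqrt_le_exp {x : ℝ} (hx : 7 ≤ x) : 3.45 * √x ≤ exp (0.32 * x) := by
  have sqrt_le : 5.3 * √x ≤ x + 7.0225 := by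
    linarith [sq_nonneg (√x - 2.65), sq_sqrt (by linarith : 0 ≤ x)]
  have exp_ge : (9.3 : ℝ) ≤ exp 2.24 :=
    le_exp_of_pow_le (p := 56) (q := 25) (by norm_num) (by norm_num) (by norm_num)
  calc 3.45 * √x ≤ 9.3 * (0.32 * (x - 7) + 1) := by linarith
    _ ≤ exp 2.24 * exp (0.32 * (x - 7)) := by
      gcongr
      exact add_one_le_exp _
    _ = exp (0.32 * x) := by rw [← exp_add]; ring_nf

lemma le_exp_half {x : ℝ} (hx : 7 ≤ x) : 33 ≤ exp (x / 2) :=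
  le_exp_of_pow_le (p := 7) (q := 2) (by norm_num) (by push_cast; linarith) (by norm_num)

lemma exp_half_add_two_le {x : ℝ} (hx : 7 ≤ x) : exp (x / 2) + 2 ≤ (5 / 3) ^ x := by
  have exp_le : exp 0.51 ≤ 5 / 3 :=
    exp_le_of_le_pow (p := 51) (q := 100) (by norm_num) (by norm_num) (by norm_num) (by norm_num)
  calc exp (x / 2) + 2 ≤ exp (x / 2) * exp (0.01 * x) := by
        nlinarith [add_one_le_exp (0.01 * x), le_exp_half hx]
    _ = exp 0.51 ^ x := by rw [← exp_add, ← exp_mul]; ring_nf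
    _ ≤ (5 / 3) ^ x := by gcongr

lemma le_gaussianPDFReal_div_mul_floor {x : ℝ} (hx : 7 ≤ x) :
    2.22 ≤ gaussianPDFReal 0 1 (0.6 * √x) / (0.6 * √x) * ⌊exp (x / 2)⌋₊ := by
  have root_pos : 0 < √x := sqrt_pos.2 (by linarith)
  have floor_ge : 32 / 33 * exp (x / 2) ≤ ⌊exp (x / 2)⌋₊ := by
    linarith [le_exp_half hx, Nat.lt_floor_add_one (exp (x / 2))]
  have pdf_ge : 0.3988 * exp (-(0.18 * x)) ≤ gaussianPDFReal 0 1 (0.6 * √x) := by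
    have exponent_eq : -(0.6 * √x) ^ 2 / 2 = -(0.18 * x) := by
      rw [mul_pow, sq_sqrt (by linarith)]
      ring
    rw [gaussianPDFReal_zero_one_eq, exponent_eq]
    gcongr
    linarith [le_sqrt_two_div_pi]
  calc 2.22 ≤ 0.3988 * (32 / 33) * exp (0.32 * x) / (0.6 * √x) := by
        rw [le_div_iff₀ (by positivity)]
        linarith [mul_sqrt_le_exp hx]
    _ = 0.3988 * exp (-(0.18 * x)) / (0.6 * √x) * (32 / 33 * exp (x / 2)) := by
        rw [show 0.32 * x = -(0.18 * x) + x / 2 by ring, exp_add]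
        ring
    _ ≤ _ := by
        gcongr
        exact div_nonneg (gaussianPDFReal_nonneg _ _ _) (by positivity)

lemma gaussianPDFReal_le_level {x : ℝ} (hx : 7 ≤ x) :
    gaussianPDFReal 0 1 (0.6 * √x) ≤ 0.6 * √x := by
  have sqrt_ge : 2 ≤ √x := le_sqrt_of_sq_le (by linarith)
  exact (gaussianPDFReal_zero_one_le_one _).trans (by linarith)

lemma le_one_sub_one_sub_pow_floor {x : ℝ} (hx : 7 ≤ x) :
    0.89 ≤ 1 - (1 - gaussianPDFReal 0 1 (0.6 * √x) / (0.6 * √x)) ^ ⌊exp (x / 2)⌋₊ := by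
  have qm_ge := le_gaussianPDFReal_div_mul_floor hx
  have q_le_one : gaussianPDFReal 0 1 (0.6 * √x) / (0.6 * √x) ≤ 1 :=
    div_le_one_of_le₀ (gaussianPDFReal_le_level hx) (by positivity)
  set m := ⌊exp (x / 2)⌋₊
  set q := gaussianPDFReal 0 1 (0.6 * √x) / (0.6 * √x)
  have exp_ge : 9.1 ≤ exp 2.22 :=
    le_exp_of_pow_le (p := 111) (q := 50) (by norm_num) (by norm_num) (by norm_num)
  have all_below_le : (1 - q) ^ m ≤ 0.11 :=
    calc (1 - q) ^ m ≤ exp (-q) ^ m :=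
          pow_le_pow_left₀ (by linarith) (one_sub_le_exp_neg q) m
      _ = exp (-(q * m)) := by rw [← exp_nat_mul]; ring_nf
      _ ≤ exp (-2.22) := exp_le_exp.2 (by linarith)
      _ = (exp 2.22)⁻¹ := exp_neg _
      _ ≤ 9.1⁻¹ := by gcongr
      _ ≤ 0.11 := by norm_num
  linarith

lemma floor_exp_half_mul_succ_le {x : ℝ} (hx : 7 ≤ x) :
    (⌊exp (x / 2)⌋₊ : ℝ) * (⌊exp (x / 2)⌋₊ + 1) ≤ 16 ^ x := by
  have exp_ge := le_exp_half hx
  have floor_le : (⌊exp (x / 2)⌋₊ : ℝ) ≤ exp (x / 2) := Nat.floor_le (exp_pos _).le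
  have exp_le : exp (3 / 2) ≤ 16 :=
    exp_le_of_le_pow (p := 3) (q := 2) (by norm_num) (by norm_num) (by norm_num) (by norm_num)
  calc (⌊exp (x / 2)⌋₊ : ℝ) * (⌊exp (x / 2)⌋₊ + 1)
      ≤ exp (x / 2) * (exp (x / 2) * exp (x / 2)) := by
        gcongr
        nlinarith
    _ = exp (3 / 2) ^ x := by rw [← exp_add, ← exp_add, ← exp_mul]; ring_nf
    _ ≤ 16 ^ x := by gcongr

lemma exists_spacing {m n : ℕ} (h : m * (m + 1) ≤ n) :
    ∃ d, (m + 1) * d ≤ n ∧ n ≤ d * (m + 2) := by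
  have m_le : m ≤ n / (m + 1) := (Nat.le_div_iff_mul_le m.succ_pos).2 h
  have n_lt : n < (m + 1) * (n / (m + 1) + 1) := Nat.lt_mul_div_succ n m.succ_pos
  exact ⟨n / (m + 1), Nat.mul_div_le n (m + 1), by nlinarith⟩

lemma le_spacing_rpow {x : ℝ} (hx : 7 ≤ x) {d n : ℕ} (hn : 0 < n)
    (h : n ≤ d * (⌊exp (x / 2)⌋₊ + 2)) : 3 / 5 ≤ (d / n : ℝ) ^ x⁻¹ := by
  have n_le : (n : ℝ) ≤ d * (5 / 3) ^ x :=
    calc (n : ℝ) ≤ d * (⌊exp (x / 2)⌋₊ + 2) := mod_cast h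
      _ ≤ d * (exp (x / 2) + 2) := by gcongr; exact Nat.floor_le (exp_pos _).le
      _ ≤ d * (5 / 3) ^ x := by gcongr; exact exp_half_add_two_le hx
  rw [le_rpow_inv_iff_of_pos (by norm_num) (by positivity) (by linarith),
    show (3 / 5 : ℝ) = (5 / 3)⁻¹ by norm_num, inv_rpow (by norm_num),
    le_div_iff₀ (by positivity), inv_mul_le_iff₀ (by positivity), mul_comm]
  exact n_le

lemma le_sqrt_two_sub_two_rpow_div_two {H : ℝ} (hH : H ≤ 1 / 7) :
    0.6248 ≤ √((2 - 2 ^ (2 * H)) / 2) := by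
  have root_le : (2 : ℝ) ^ (2 / 7 : ℝ) ≤ 1.2191 := by
    refine le_of_pow_le_pow_left₀ (n := 7) (by norm_num) (by norm_num) ?_
    rw [← rpow_mul_natCast (by norm_num)]
    norm_num
  have rpow_le : (2 : ℝ) ^ (2 * H) ≤ 1.2191 :=
    (rpow_le_rpow_of_exponent_le one_le_two (by linarith)).trans root_le
  refine le_sqrt_of_sq_le ?_
  linarith

lemma IsFBM.one_div_five_mul_sqrt_le_expMaxGrid {Ω : Type} [MeasurableSpace Ω] {μ : Measure Ω}
    {H : ℝ} {B : ℝ → Ω → ℝ} (hB : IsFBM μ H B) (hH0 : 0 < H) (hH : H ≤ 1 / 7) {n : ℕ}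
    (hn : 0 < n) (hpow : 16 ≤ (n : ℝ) ^ H) : 1 / (5 * √H) ≤ expMaxGrid μ B n := by
  obtain ⟨x, rfl⟩ : ∃ x, H = x⁻¹ := ⟨H⁻¹, (inv_inv H).symm⟩
  have x_ge : 7 ≤ x := by
    rwa [one_div, inv_le_inv₀ (inv_pos.1 hH0) (by norm_num)] at hH
  have rpow_le_n : (16 : ℝ) ^ x ≤ n :=
    (le_rpow_inv_iff_of_pos (by norm_num) n.cast_nonneg (by linarith)).1 hpow
  obtain ⟨d, md_le, n_le⟩ := exists_spacing (m := ⌊exp (x / 2)⌋₊) (n := n)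
    (mod_cast (floor_exp_half_mul_succ_le x_ge).trans rpow_le_n)
  have root_pos : 0 < √x := sqrt_pos.2 (by linarith)
  calc 1 / (5 * √x⁻¹) = 0.2 * √x := by
        rw [sqrt_inv]
        field_simp
        norm_num
    _ ≤ 3 / 5 * 0.6248 * (0.6 * √x * 0.89) := by linarith
    _ ≤ (d / n : ℝ) ^ x⁻¹ * √((2 - 2 ^ (2 * x⁻¹)) / 2) * (0.6 * √x *
        (1 - (1 - gaussianPDFReal 0 1 (0.6 * √x) / (0.6 * √x)) ^ ⌊exp (x / 2)⌋₊)) := by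
        gcongr
        exacts [le_spacing_rpow x_ge hn n_le, le_sqrt_two_sub_two_rpow_div_two hH,
          le_one_sub_one_sub_pow_floor x_ge]
    _ ≤ expMaxGrid μ B n := hB.spaced_level_le_expMaxGrid hH0 (by linarith) md_le
        (by positivity) (gaussianPDFReal_le_level x_ge)

end SpacedRegime

/-- for `n ≥ 2^{1/H}`, `f(H,n) ≥ 1/(5√H) - 6√(ln n)/n^H - 0.0107`. -/
theorem stmt17 {Ω : Type} [MeasurableSpace Ω] (μ : Measure Ω) [IsProbabilityMeasure μ]
    (H : ℝ) (hH : H ∈ Ioo (0:ℝ) 1) (B : ℝ → Ω → ℝ) (hB : IsFBM μ H B)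
    (n : ℕ) (hn : (2:ℝ) ^ (1 / H) ≤ (n : ℝ)) :
    1 / (5 * Real.sqrt H) - 6 * Real.sqrt (Real.log n) / (n : ℝ) ^ H - 0.0107 ≤
      expMaxGrid μ B n := by
  obtain ⟨hH0, hH1⟩ := hH
  have n_pos : 0 < n := Nat.cast_pos.1 (lt_of_lt_of_le (by positivity) hn)
  rcases le_total ((n : ℝ) ^ H) 16 with hpow | hpow
  · linarith [one_div_five_mul_sqrt_le_of_rpow_le hH0 hn hpow,
      hB.expMaxGrid_nonneg hH0.ne' n_pos.ne']
  have correction_nonneg : 0 ≤ 6 * √(log n) / (n : ℝ) ^ H := by positivity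
  rcases le_total H (1 / 7) with hH7 | hH7
  · linarith [hB.one_div_five_mul_sqrt_le_expMaxGrid hH0 hH7 n_pos hpow]
  · have n_ge : 16 ≤ n := by
      have := hpow.trans (rpow_le_self_of_one_le (mod_cast n_pos) hH1.le)
      exact_mod_cast this
    linarith [hB.one_div_five_mul_sqrt_sub_le_expMaxGrid hH7 hH1.le n_ge]
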